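/- Let u:[0,T]→ℝ be continuous, C² on [0,γ] and on [γ,T] with γ∈(0,T), and suppose the jump J := ∂⁺u(γ) − ∂⁻u(γ) is nonzero. Let M be a uniform bound on |u''| on each side. Then for any τ with τ < γ < τ+Δt and κ := (γ−τ)/Δt ≤ 1/2, if Δt < |J|/(4M), the one-step Euler error |u(τ+Δt) − u(τ) − Δt·∂⁻u-extension derivative at τ| is at least (|J|/4)·Δt, i.e., strictly first order, whereas for steps entirely inside one phase the error is at most (M/2)·Δt². Hence for sufficiently small Δt the boundary-crossing error exceeds every interior error. -/

import Mathlib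

/-!
A step from `τ` to `τ + Δt` across `γ` splits at `γ` into lengths `a = γ - τ` and
`b = τ + Δt - γ`. Writing `R₁`, `R₂` for the first-order Taylor remainders of `u₁` on `[τ, γ]` and
of `u₂` on `[γ, τ + Δt]`, continuity of `u` at `γ` gives
`error = b J + R₁ + R₂ + b (u₁'(γ) - u₁'(τ))`.
Since `|R₁| ≤ M a² / 2`, `|R₂| ≤ M b² / 2` and `|u₁'(γ) - u₁'(τ)| ≤ M a`
(`taylor_one_remainder_le`, `deriv_sub_le`), the last three terms add up to at most
`M (a + b)² / 2 = M Δt² / 2`, which is below `|J| Δt / 8` for `Δt < |J| / (4 M)`, while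
`b |J| ≥ |J| Δt / 2` because `κ ≤ 1 / 2`. The interior bounds are the Taylor estimate itself.
-/

theorem deriv_sub_le {f : ℝ → ℝ} (hf : ContDiff ℝ 2 f) {M a b : ℝ} (hab : a ≤ b)
    (hM : ∀ t ∈ Set.Icc a b, |deriv (deriv f) t| ≤ M) :
    |deriv f b - deriv f a| ≤ M * (b - a) := by
  have hd : Differentiable ℝ (deriv f) :=
    ((contDiff_succ_iff_deriv (n := 1)).1 hf).2.2.differentiable one_ne_zero
  have h := (convex_Icc a b).norm_image_sub_le_of_norm_deriv_le (f := deriv f)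
    (fun t _ => hd t) hM (Set.left_mem_Icc.2 hab) (Set.right_mem_Icc.2 hab)
  rwa [Real.norm_eq_abs, Real.norm_eq_abs, abs_of_nonneg (sub_nonneg.2 hab)] at h

theorem taylor_one_remainder_le {f : ℝ → ℝ} (hf : ContDiff ℝ 2 f) {M a b : ℝ} (hab : a ≤ b)
    (hM : ∀ t ∈ Set.Icc a b, |deriv (deriv f) t| ≤ M) :
    |f b - f a - (b - a) * deriv f a| ≤ M / 2 * (b - a) ^ 2 := by
  have hd : Differentiable ℝ f := hf.differentiable two_ne_zero
  have hg : ∀ t, HasDerivAt (fun t => f t - f a - (t - a) * deriv f a)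
      (deriv f t - deriv f a) t := fun t => by
    have h : HasDerivAt (fun t => f t - f a - (t - a) * deriv f a) _ t :=
      ((hd t).hasDerivAt.sub_const (f a)).sub
        (((hasDerivAt_id t).sub_const a).mul_const (deriv f a))
    rwa [one_mul] at h
  have hB : ∀ t, HasDerivAt (fun t => M / 2 * (t - a) ^ 2) (M * (t - a)) t := fun t => by
    have h : HasDerivAt (fun t => M / 2 * (t - a) ^ 2) _ t :=
      (((hasDerivAt_id t).sub_const a).pow 2).const_mul (M / 2)
    convert h using 1
    simp only [id_eq]
    ring
  -- The remainder vanishes at `a`, and its derivative is dominated by that of `M (t - a)² / 2`.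
  exact image_norm_le_of_norm_deriv_right_le_deriv_boundary
    (fun t _ => (hg t).continuousAt.continuousWithinAt)
    (fun t _ => (hg t).hasDerivWithinAt) (by simp) hB
    (fun t ht => deriv_sub_le hf ht.1 fun s hs => hM s ⟨hs.1, hs.2.trans ht.2.le⟩)
    (Set.right_mem_Icc.2 hab)

/-- detectability of the phase boundary.
With `u = u₁` on `[0,γ]`, `u = u₂` on `[γ,T]`, both `C²` with second derivatives bounded
by `M > 0` on `[0,T]`, and jump `J = ∂⁺u(γ) - ∂⁻u(γ) ≠ 0`: a step crossing the boundary
with `κ = (γ-τ)/Δt ≤ 1/2` and `Δt < |J|/(4M)` has Euler error at least `(|J|/4)Δt`,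
while steps entirely inside one phase have error at most `(M/2)Δt²`. -/
theorem stmt2 (T γ M : ℝ) (hγ0 : 0 < γ) (hγT : γ < T) (hM : 0 < M)
    (u u₁ u₂ : ℝ → ℝ)
    (hu₁ : ContDiff ℝ 2 u₁) (hu₂ : ContDiff ℝ 2 u₂)
    (h1 : ∀ t ∈ Set.Icc (0:ℝ) γ, u t = u₁ t)
    (h2 : ∀ t ∈ Set.Icc γ T, u t = u₂ t)
    (hM₁ : ∀ t ∈ Set.Icc (0:ℝ) T, |deriv (deriv u₁) t| ≤ M)
    (hM₂ : ∀ t ∈ Set.Icc (0:ℝ) T, |deriv (deriv u₂) t| ≤ M)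
    (J : ℝ) (hJdef : J = deriv u₂ γ - deriv u₁ γ) (hJ0 : J ≠ 0) :
    (∀ τ Δt : ℝ, 0 ≤ τ → τ < γ → γ < τ + Δt → τ + Δt ≤ T →
      (γ - τ) / Δt ≤ 1 / 2 → Δt < |J| / (4 * M) →
      |J| / 4 * Δt ≤ |u (τ + Δt) - u τ - Δt * deriv u₁ τ|) ∧
    (∀ τ Δt : ℝ, 0 ≤ Δt → 0 ≤ τ → τ + Δt ≤ γ →
      |u (τ + Δt) - u τ - Δt * deriv u₁ τ| ≤ M / 2 * Δt ^ 2) ∧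
    (∀ τ Δt : ℝ, 0 ≤ Δt → γ ≤ τ → τ + Δt ≤ T →
      |u (τ + Δt) - u τ - Δt * deriv u₂ τ| ≤ M / 2 * Δt ^ 2) := by
  refine ⟨fun τ Δt h0 hτ hγ hT hκ hΔ => ?_, fun τ Δt hΔ h0 hγ => ?_, fun τ Δt hΔ hγ hT => ?_⟩
  · have hΔ0 : 0 < Δt := by linarith
    rw [div_le_iff₀ hΔ0] at hκ
    rw [lt_div_iff₀ (by positivity)] at hΔ
    have e : u₂ γ = u₁ γ := by
      rw [← h1 γ ⟨hγ0.le, le_rfl⟩, ← h2 γ ⟨le_rfl, hγT.le⟩]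
    have hM₁' : ∀ t ∈ Set.Icc τ γ, |deriv (deriv u₁) t| ≤ M :=
      fun t ht => hM₁ t ⟨h0.trans ht.1, ht.2.trans hγT.le⟩
    have R₁ := taylor_one_remainder_le hu₁ hτ.le hM₁'
    have D₁ := deriv_sub_le hu₁ hτ.le hM₁'
    have R₂ := taylor_one_remainder_le hu₂ hγ.le
      fun t ht => hM₂ t ⟨hγ0.le.trans ht.1, ht.2.trans hT⟩
    rw [h1 τ ⟨h0, hτ.le⟩, h2 (τ + Δt) ⟨hγ.le, hT⟩]
    have hb : 0 < τ + Δt - γ := by linarith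
    have D₁' : |(τ + Δt - γ) * (deriv u₁ γ - deriv u₁ τ)| ≤
        (τ + Δt - γ) * (M * (γ - τ)) := by
      rw [abs_mul, abs_of_pos hb]
      gcongr
    have key : (τ + Δt - γ) * J = (u₂ (τ + Δt) - u₁ τ - Δt * deriv u₁ τ)
        - (u₁ γ - u₁ τ - (γ - τ) * deriv u₁ τ)
        - (u₂ (τ + Δt) - u₂ γ - (τ + Δt - γ) * deriv u₂ γ)
        - (τ + Δt - γ) * (deriv u₁ γ - deriv u₁ τ) := by
      rw [hJdef, e]; ring
    have tri : (τ + Δt - γ) * |J| ≤ |u₂ (τ + Δt) - u₁ τ - Δt * deriv u₁ τ|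
        + M / 2 * Δt ^ 2 := by
      rw [← abs_of_pos hb, ← abs_mul, key]
      refine (abs_sub _ _).trans ?_
      have t1 := abs_sub (u₂ (τ + Δt) - u₁ τ - Δt * deriv u₁ τ)
        (u₁ γ - u₁ τ - (γ - τ) * deriv u₁ τ)
      have t2 := abs_sub (u₂ (τ + Δt) - u₁ τ - Δt * deriv u₁ τ
        - (u₁ γ - u₁ τ - (γ - τ) * deriv u₁ τ))
        (u₂ (τ + Δt) - u₂ γ - (τ + Δt - γ) * deriv u₂ γ)
      linarith
    have hJ : 1 / 2 * Δt * |J| ≤ (τ + Δt - γ) * |J| := by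
      gcongr
      linarith
    have hq : Δt * (Δt * (4 * M)) ≤ Δt * |J| := by gcongr
    have hp : 0 ≤ Δt * |J| := by positivity
    linarith
  · rw [h1 τ ⟨h0, by linarith⟩, h1 (τ + Δt) ⟨by linarith, hγ⟩]
    simpa using taylor_one_remainder_le hu₁ (show τ ≤ τ + Δt by linarith)
      fun t ht => hM₁ t ⟨h0.trans ht.1, by linarith [ht.2]⟩
  · rw [h2 τ ⟨hγ, by linarith⟩, h2 (τ + Δt) ⟨by linarith, hT⟩]
    simpa using taylor_one_remainder_le hu₂ (show τ ≤ τ + Δt by linarith)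
      fun t ht => hM₂ t ⟨by linarith [ht.1], ht.2.trans hT⟩
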